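/- (Dimension one, even integer order p, N = 2.) Let p ≥ 2 be an even integer. (a) If μ, ν are Borel probability measures on ℝ with finite p-th moments and there exists a real constant C such that e_{2,p}(μ, (a,b)) = e_{2,p}(ν, (a,b)) + C for all (a, b) ∈ ℝ², then μ = ν. (b) If μ_n (n ≥ 1) and μ_∞ are Borel probability measures on ℝ with finite p-th moments, the following are equivalent: (i) W_p(μ_n, μ_∞) → 0; (ii) e_{2,p}(μ_n, ·) → e_{2,p}(μ_∞, ·) uniformly on ℝ²; (iii) e_{2,p}(μ_n, ·) → e_{2,p}(μ_∞, ·) pointwise on ℝ². -/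

import Mathlib

open MeasureTheory Filter Topology
open scoped ENNReal NNReal

/-- The `L^p`-quantization error function at level `N`. -/
noncomputable def quantErr {E : Type*} [NormedAddCommGroup E] [MeasurableSpace E]
    (p : ℝ) (N : ℕ) (μ : Measure E) (x : Fin N → E) : ℝ :=
  (∫⁻ ξ, ⨅ i, (‖ξ - x i‖₊ : ℝ≥0∞) ^ p ∂μ).toReal ^ (1 / p)

/-- The `L^p`-Wasserstein distance. -/
noncomputable def wassersteinDist {E : Type*} [NormedAddCommGroup E] [MeasurableSpace E]
    (p : ℝ) (μ ν : Measure E) : ℝ :=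
  (⨅ π ∈ {π : Measure (E × E) | π.map Prod.fst = μ ∧ π.map Prod.snd = ν},
      ∫⁻ q, (‖q.1 - q.2‖₊ : ℝ≥0∞) ^ p ∂π).toReal ^ (1 / p)

/-- `μ` has a finite `p`-th moment. -/
def HasFiniteMoment {E : Type*} [NormedAddCommGroup E] [MeasurableSpace E]
    (p : ℝ) (μ : Measure E) : Prop :=
  ∫⁻ ξ, (‖ξ‖₊ : ℝ≥0∞) ^ p ∂μ ≠ ∞

/-!
For even `p`, the polynomial `(t + y) ^ p - (t - y) ^ p` in `t` has degree less than `p` and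
coefficient `2 p y` at `t ^ (p - 1)`, so Lagrange interpolation at `t = 0, …, p - 1` writes
`max y 0` as a fixed linear combination of the functions
`(y + t) ^ p - min ((y + t) ^ p) ((y - t) ^ p)`. Integrating, the `p`-th powers of the two-point
quantization errors determine the stop-loss transform `c ↦ 𝔼[(ξ - c)⁺]`, compatibly with
pointwise limits. Its difference quotients are squeezed between values of the survival function
`1 - cdf`, hence the stop-loss transform determines the measure, and its pointwise convergence
forces the quantile functions to converge almost everywhere on `(0, 1)`. The error of the codebook
`{0}` is the `L^p` norm, so the norms of the quantile functions converge as well, and Riesz's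
theorem upgrades almost everywhere convergence to `L^p` convergence of the quantile coupling, which
dominates `W_p`. Conversely, Minkowski's inequality gives `|e(μ, x) - e(ν, x)| ≤ W_p(μ, ν)`.

An additive constant `C` between two error functions vanishes because
`|t| e(μ, (1 / t, 1 / t)) = ‖1 - t ξ‖_{L^p(μ)}` is differentiable in `t` at `0`, whereas `C |t|` is
differentiable only for `C = 0`.
-/

section LebesgueConvergence

variable {α ι : Type*} [MeasurableSpace α] {μ : Measure α} {l : Filter ι} [l.NeBot]
  [l.IsCountablyGenerated]

lemma tendsto_lintegral_zero_of_le {f g : ι → α → ℝ≥0∞} {G : α → ℝ≥0∞}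
    (hf : ∀ i, AEMeasurable (f i) μ) (hg : ∀ i, AEMeasurable (g i) μ) (hfg : ∀ i, f i ≤ g i)
    (hf_lim : ∀ᵐ x ∂μ, Tendsto (f · x) l (𝓝 0)) (hg_lim : ∀ᵐ x ∂μ, Tendsto (g · x) l (𝓝 (G x)))
    (hG : ∫⁻ x, G x ∂μ ≠ ∞) (hg_int : Tendsto (fun i ↦ ∫⁻ x, g i x ∂μ) l (𝓝 (∫⁻ x, G x ∂μ))) :
    Tendsto (fun i ↦ ∫⁻ x, f i x ∂μ) l (𝓝 0) := by
  have fatou : ∫⁻ x, G x ∂μ ≤ liminf (fun i ↦ ∫⁻ x, g i x - f i x ∂μ) l := by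
    refine le_of_eq_of_le (lintegral_congr_ae ?_)
      (lintegral_liminf_le' fun i ↦ (hg i).sub (hf i))
    filter_upwards [hf_lim, hg_lim] with x hfx hgx
    simpa using (ENNReal.Tendsto.sub hgx hfx (.inr ENNReal.zero_ne_top)).liminf_eq.symm
  have limsup_le : limsup (fun i ↦ ∫⁻ x, g i x - f i x ∂μ) l ≤ ∫⁻ x, G x ∂μ :=
    hg_int.limsup_eq ▸ limsup_le_limsup (.of_forall fun i ↦ lintegral_mono fun x ↦ tsub_le_self)
  have sub_lim : Tendsto (fun i ↦ ∫⁻ x, g i x - f i x ∂μ) l (𝓝 (∫⁻ x, G x ∂μ)) :=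
    tendsto_of_le_liminf_of_limsup_le fatou limsup_le
  have lim := ENNReal.Tendsto.sub hg_int sub_lim (.inl hG)
  rw [tsub_self] at lim
  refine lim.congr' ?_
  filter_upwards [hg_int.eventually_ne hG] with i hi
  have hle : ∫⁻ x, g i x - f i x ∂μ ≤ ∫⁻ x, g i x ∂μ := lintegral_mono fun x ↦ tsub_le_self
  refine (ENNReal.eq_sub_of_add_eq (ne_top_of_le_ne_top hi hle) ?_).symm
  rw [← lintegral_add_left' (hf i)]
  exact lintegral_congr fun x ↦ add_tsub_cancel_of_le (hfg i x)

lemma tendsto_lintegral_enorm_sub_rpow {E : Type*} [NormedAddCommGroup E] {X : ι → α → E}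
    {Y : α → E} {q : ℝ} (hq : 0 < q) (hX : ∀ i, AEStronglyMeasurable (X i) μ)
    (hY : AEStronglyMeasurable Y μ) (hY_int : ∫⁻ x, ‖Y x‖ₑ ^ q ∂μ ≠ ∞)
    (hlim : ∀ᵐ x ∂μ, Tendsto (X · x) l (𝓝 (Y x)))
    (hint : Tendsto (fun i ↦ ∫⁻ x, ‖X i x‖ₑ ^ q ∂μ) l (𝓝 (∫⁻ x, ‖Y x‖ₑ ^ q ∂μ))) :
    Tendsto (fun i ↦ ∫⁻ x, ‖X i x - Y x‖ₑ ^ q ∂μ) l (𝓝 0) := by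
  set c := ENNReal.LpAddConst (ENNReal.ofReal q)⁻¹
  have hc : c ≠ ∞ := (ENNReal.LpAddConst_lt_top _).ne
  have integral_bound (Z : α → E) (hZ : AEStronglyMeasurable Z μ) :
      ∫⁻ x, c * (‖Z x‖ₑ ^ q + ‖Y x‖ₑ ^ q) ∂μ
        = c * (∫⁻ x, ‖Z x‖ₑ ^ q ∂μ + ∫⁻ x, ‖Y x‖ₑ ^ q ∂μ) := by
    rw [lintegral_const_mul' _ _ hc, lintegral_add_left' (hZ.enorm.pow_const q)]
  refine tendsto_lintegral_zero_of_le (g := fun i x ↦ c * (‖X i x‖ₑ ^ q + ‖Y x‖ₑ ^ q))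
    (G := fun x ↦ c * (‖Y x‖ₑ ^ q + ‖Y x‖ₑ ^ q)) (fun i ↦ ((hX i).sub hY).enorm.pow_const q)
    (fun i ↦ (((hX i).enorm.pow_const q).add (hY.enorm.pow_const q)).const_mul c)
    (fun i x ↦ ?_) ?_ ?_ ?_ ?_
  · calc ‖X i x - Y x‖ₑ ^ q ≤ (‖X i x‖ₑ + ‖Y x‖ₑ) ^ q := by gcongr; exact enorm_sub_le
      _ ≤ c * (‖X i x‖ₑ ^ q + ‖Y x‖ₑ ^ q) := ENNReal.rpow_add_le_mul_rpow_add_rpow' _ _ hq.le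
  · filter_upwards [hlim] with x hx
    simpa [hq] using (hx.sub_const (Y x)).enorm.ennrpow_const q
  · filter_upwards [hlim] with x hx
    exact ENNReal.Tendsto.const_mul ((hx.enorm.ennrpow_const q).add_const _) (.inr hc)
  · rw [integral_bound Y hY]
    finiteness
  · simp_rw [fun i ↦ integral_bound (X i) (hX i), integral_bound Y hY]
    exact ENNReal.Tendsto.const_mul (hint.add_const _) (.inr hc)

lemma tendsto_eLpNorm'_sub_zero {E : Type*} [NormedAddCommGroup E] {X : ι → α → E}
    {Y : α → E} {q : ℝ} (hq : 0 < q) (hX : ∀ i, AEStronglyMeasurable (X i) μ)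
    (hY : AEStronglyMeasurable Y μ) (hY_fin : eLpNorm' Y q μ ≠ ∞)
    (hlim : ∀ᵐ x ∂μ, Tendsto (X · x) l (𝓝 (Y x)))
    (hnorm : Tendsto (fun i ↦ eLpNorm' (X i) q μ) l (𝓝 (eLpNorm' Y q μ))) :
    Tendsto (fun i ↦ eLpNorm' (X i - Y) q μ) l (𝓝 0) := by
  have key := tendsto_lintegral_enorm_sub_rpow hq hX hY
    (by simpa only [lintegral_rpow_enorm_eq_rpow_eLpNorm' hq] using
      ENNReal.rpow_ne_top_of_nonneg hq.le hY_fin) hlim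
    (by simpa only [lintegral_rpow_enorm_eq_rpow_eLpNorm' hq] using hnorm.ennrpow_const q)
  simpa [eLpNorm'_eq_lintegral_enorm, hq] using key.ennrpow_const (1 / q)

end LebesgueConvergence

section Coupling

lemma eLpNorm'_sub_le {α E : Type*} [MeasurableSpace α] [NormedAddCommGroup E] {μ : Measure α}
    {f g : α → E} {q : ℝ} (hq : 1 ≤ q) (hf : AEStronglyMeasurable f μ)
    (hg : AEStronglyMeasurable g μ) : eLpNorm' (f - g) q μ ≤ eLpNorm' f q μ + eLpNorm' g q μ := by
  simpa only [sub_eq_add_neg, eLpNorm'_neg] using eLpNorm'_add_le hf hg.neg hq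

variable {E : Type*} [NormedAddCommGroup E] [MeasurableSpace E] {p : ℝ} {N : ℕ} {μ ν : Measure E}

/-- The quantization error `quantErr` with values in `[0, ∞]`, for which the triangle inequality
needs no finiteness assumption. -/
noncomputable def equantErr (p : ℝ) (N : ℕ) (μ : Measure E) (x : Fin N → E) : ℝ≥0∞ :=
  (∫⁻ ξ, ⨅ i, ‖ξ - x i‖ₑ ^ p ∂μ) ^ (1 / p)

/-- The Wasserstein distance `wassersteinDist` with values in `[0, ∞]`. The `p`-th root is taken
inside the infimum, so that couplings are compared through their `L^p` seminorms. -/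
noncomputable def ewassersteinDist (p : ℝ) (μ ν : Measure E) : ℝ≥0∞ :=
  ⨅ π ∈ {π : Measure (E × E) | π.map Prod.fst = μ ∧ π.map Prod.snd = ν},
    eLpNorm' (fun q ↦ q.1 - q.2) p π

lemma toReal_equantErr (x : Fin N → E) : (equantErr p N μ x).toReal = quantErr p N μ x :=
  (ENNReal.toReal_rpow _ _).symm

lemma equantErr_zero [NeZero N] : equantErr p N μ 0 = eLpNorm' id p μ := by
  simp [equantErr, eLpNorm'_eq_lintegral_enorm]

lemma toReal_ewassersteinDist (hp : 0 < p) :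
    (ewassersteinDist p μ ν).toReal = wassersteinDist p μ ν := by
  rw [wassersteinDist, ENNReal.toReal_rpow]
  exact congrArg ENNReal.toReal
    ((ENNReal.orderIsoRpow (1 / p) (one_div_pos.mpr hp)).map_iInf₂ _).symm

lemma HasFiniteMoment.eLpNorm'_ne_top (hp : 0 ≤ p) (h : HasFiniteMoment p μ) :
    eLpNorm' id p μ ≠ ∞ :=
  ENNReal.rpow_ne_top_of_nonneg (by positivity) h

lemma HasFiniteMoment.memLp [OpensMeasurableSpace E] [SecondCountableTopology E] {p : ℕ}
    (hp : p ≠ 0) (h : HasFiniteMoment (p : ℝ) μ) : MemLp id p μ := by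
  refine ⟨aestronglyMeasurable_id, ?_⟩
  rw [eLpNorm_eq_eLpNorm' (by simpa) (by simp), ENNReal.toReal_natCast]
  exact (h.eLpNorm'_ne_top p.cast_nonneg).lt_top

variable {Ω : Type*} [MeasurableSpace Ω] {P : Measure Ω} {X Y : Ω → E}

lemma eLpNorm'_id_map [OpensMeasurableSpace E] (hX : AEMeasurable X P) :
    eLpNorm' id p (P.map X) = eLpNorm' X p P := by
  simp only [eLpNorm'_eq_lintegral_enorm, id]
  rw [lintegral_map' (by fun_prop) hX]

variable [BorelSpace E] [SecondCountableTopology E]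

lemma ewassersteinDist_map_le (hX : AEMeasurable X P) (hY : AEMeasurable Y P) :
    ewassersteinDist p (P.map X) (P.map Y) ≤ eLpNorm' (X - Y) p P := by
  have hXY : AEMeasurable (fun ω ↦ (X ω, Y ω)) P := hX.prodMk hY
  refine iInf₂_le_of_le (P.map fun ω ↦ (X ω, Y ω)) ⟨?_, ?_⟩ ?_
  · exact AEMeasurable.map_map_of_aemeasurable measurable_fst.aemeasurable hXY
  · exact AEMeasurable.map_map_of_aemeasurable measurable_snd.aemeasurable hXY
  · simp only [eLpNorm'_eq_lintegral_enorm]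
    rw [lintegral_map' (by fun_prop) hXY]
    rfl

lemma tendsto_ewassersteinDist_map {ι : Type*} {l : Filter ι} [l.NeBot] [l.IsCountablyGenerated]
    {Xs : ι → Ω → E} (hp : 0 < p) (hXs : ∀ i, AEMeasurable (Xs i) P) (hY : AEMeasurable Y P)
    (hY_fin : eLpNorm' id p (P.map Y) ≠ ∞) (hlim : ∀ᵐ ω ∂P, Tendsto (Xs · ω) l (𝓝 (Y ω)))
    (hnorm : Tendsto (fun i ↦ eLpNorm' id p (P.map (Xs i))) l (𝓝 (eLpNorm' id p (P.map Y)))) :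
    Tendsto (fun i ↦ ewassersteinDist p (P.map (Xs i)) (P.map Y)) l (𝓝 0) := by
  simp only [eLpNorm'_id_map (hXs _), eLpNorm'_id_map hY] at hnorm hY_fin
  exact tendsto_of_tendsto_of_tendsto_of_le_of_le tendsto_const_nhds
    (tendsto_eLpNorm'_sub_zero hp (fun i ↦ (hXs i).aestronglyMeasurable)
      hY.aestronglyMeasurable hY_fin hlim hnorm)
    (fun _ ↦ zero_le) (fun i ↦ ewassersteinDist_map_le (hXs i) hY)

lemma equantErr_map_le (hp : 1 ≤ p) (hX : Measurable X) (hY : Measurable Y) (x : Fin N → E) :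
    equantErr p N (P.map X) x ≤ eLpNorm' (X - Y) p P + equantErr p N (P.map Y) x := by
  have hp0 : 0 < p := by positivity
  have iInf_rpow (a : Fin N → ℝ≥0∞) : ⨅ i, a i ^ p = (⨅ i, a i) ^ p :=
    ((ENNReal.orderIsoRpow p hp0).map_iInf a).symm
  have iInf_le (ω : Ω) : ⨅ i, ‖X ω - x i‖ₑ ≤ ‖X ω - Y ω‖ₑ + ⨅ i, ‖Y ω - x i‖ₑ := by
    rw [ENNReal.add_iInf]
    exact iInf_mono fun i ↦ by simpa using enorm_add_le (X ω - Y ω) (Y ω - x i)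
  simp only [equantErr, eLpNorm'_eq_lintegral_enorm]
  rw [lintegral_map (by fun_prop) hX, lintegral_map (by fun_prop) hY]
  simp_rw [iInf_rpow]
  calc (∫⁻ ω, (⨅ i, ‖X ω - x i‖ₑ) ^ p ∂P) ^ (1 / p)
      ≤ (∫⁻ ω, (‖X ω - Y ω‖ₑ + ⨅ i, ‖Y ω - x i‖ₑ) ^ p ∂P) ^ (1 / p) := by
        gcongr with ω
        exact iInf_le ω
    _ ≤ _ := ENNReal.lintegral_Lp_add_le (by fun_prop) (by fun_prop) hp

lemma equantErr_le_ewassersteinDist_add (hp : 1 ≤ p) (x : Fin N → E) :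
    equantErr p N μ x ≤ ewassersteinDist p μ ν + equantErr p N ν x := by
  simp only [ewassersteinDist, ENNReal.iInf_add]
  refine le_iInf₂ fun π hπ ↦ ?_
  obtain ⟨rfl, rfl⟩ := hπ
  exact equantErr_map_le hp measurable_fst measurable_snd x

lemma ewassersteinDist_comm : ewassersteinDist p μ ν = ewassersteinDist p ν μ := by
  have le (μ ν : Measure E) : ewassersteinDist p μ ν ≤ ewassersteinDist p ν μ := by
    refine le_iInf₂ fun π hπ ↦ ?_
    obtain ⟨rfl, rfl⟩ := hπ
    refine (ewassersteinDist_map_le measurable_snd.aemeasurable measurable_fst.aemeasurable).trans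
      (eLpNorm'_congr_norm_ae (.of_forall fun q ↦ norm_sub_rev _ _)).le
  exact le_antisymm (le μ ν) (le ν μ)

variable [IsProbabilityMeasure μ] [IsProbabilityMeasure ν]

lemma equantErr_ne_top [NeZero N] (hp : 1 ≤ p) (hμ : HasFiniteMoment p μ) (x : Fin N → E) :
    equantErr p N μ x ≠ ∞ := by
  have hp0 : 0 < p := by positivity
  have hconst : eLpNorm' (fun _ ↦ x 0) p μ ≠ ∞ := by
    rw [eLpNorm'_const_of_isProbabilityMeasure _ hp0]
    exact enorm_ne_top
  refine ne_top_of_le_ne_top (ENNReal.add_ne_top.mpr ⟨hμ.eLpNorm'_ne_top hp0.le, hconst⟩) <|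
    calc equantErr p N μ x ≤ eLpNorm' (id - fun _ ↦ x 0) p μ :=
          ENNReal.rpow_le_rpow (lintegral_mono fun ξ ↦ iInf_le _ 0) (by positivity)
      _ ≤ eLpNorm' id p μ + eLpNorm' (fun _ ↦ x 0) p μ :=
          eLpNorm'_sub_le hp aestronglyMeasurable_id aestronglyMeasurable_const

lemma ewassersteinDist_ne_top (hp : 1 ≤ p) (hμ : HasFiniteMoment p μ) (hν : HasFiniteMoment p ν) :
    ewassersteinDist p μ ν ≠ ∞ := by
  have hp0 : 0 ≤ p := by positivity
  have hfst : (μ.prod ν).map Prod.fst = μ := measurePreserving_fst.map_eq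
  have hsnd : (μ.prod ν).map Prod.snd = ν := measurePreserving_snd.map_eq
  refine ne_top_of_le_ne_top
    (ENNReal.add_ne_top.mpr ⟨hμ.eLpNorm'_ne_top hp0, hν.eLpNorm'_ne_top hp0⟩) <|
    calc ewassersteinDist p μ ν ≤ eLpNorm' (Prod.fst - Prod.snd) p (μ.prod ν) := by
          simpa only [hfst, hsnd] using ewassersteinDist_map_le (P := μ.prod ν)
            measurable_fst.aemeasurable measurable_snd.aemeasurable
      _ ≤ eLpNorm' Prod.fst p (μ.prod ν) + eLpNorm' Prod.snd p (μ.prod ν) :=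
          eLpNorm'_sub_le hp measurable_fst.aestronglyMeasurable
            measurable_snd.aestronglyMeasurable
      _ = eLpNorm' id p μ + eLpNorm' id p ν := by
          rw [← eLpNorm'_id_map measurable_fst.aemeasurable, hfst,
            ← eLpNorm'_id_map measurable_snd.aemeasurable, hsnd]

lemma abs_quantErr_sub_le_wassersteinDist [NeZero N] (hp : 1 ≤ p) (hμ : HasFiniteMoment p μ)
    (hν : HasFiniteMoment p ν) (x : Fin N → E) :
    |quantErr p N μ x - quantErr p N ν x| ≤ wassersteinDist p μ ν := by
  have hW := ewassersteinDist_ne_top hp hμ hν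
  have hle := ENNReal.toReal_le_add (equantErr_le_ewassersteinDist_add hp x) hW
    (equantErr_ne_top hp hν x)
  have hge := ENNReal.toReal_le_add (equantErr_le_ewassersteinDist_add hp x)
    (ewassersteinDist_comm (p := p) (μ := μ) ▸ hW) (equantErr_ne_top hp hμ x)
  rw [ewassersteinDist_comm] at hge
  simp only [toReal_equantErr, toReal_ewassersteinDist (zero_lt_one.trans_le hp)] at hle hge
  exact abs_sub_le_iff.mpr ⟨by linarith, by linarith⟩

lemma tendstoUniformly_quantErr_of_tendsto_wassersteinDist [NeZero N] {ι : Type*} {l : Filter ι}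
    {μs : ι → Measure E} [∀ i, IsProbabilityMeasure (μs i)] (hp : 1 ≤ p)
    (hμs : ∀ i, HasFiniteMoment p (μs i)) (hν : HasFiniteMoment p ν)
    (hW : Tendsto (fun i ↦ wassersteinDist p (μs i) ν) l (𝓝 0)) :
    TendstoUniformly (fun i (x : Fin N → E) ↦ quantErr p N (μs i) x) (quantErr p N ν) l := by
  rw [Metric.tendstoUniformly_iff]
  intro ε hε
  filter_upwards [hW.eventually_lt_const hε] with i hi x
  rw [dist_comm, Real.dist_eq]
  exact (abs_quantErr_sub_le_wassersteinDist hp (hμs i) hν x).trans_lt hi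

end Coupling

section StopLoss

lemma exists_sum_mul_add_pow_sub_sub_pow {F : Type*} [Field F] [CharZero F] {p : ℕ}
    (hp0 : p ≠ 0) :
    ∃ w : ℕ → F, ∀ y, ∑ i ∈ Finset.range p, w i * ((i + y) ^ p - (i - y) ^ p) = y := by
  -- Interpolate at `0, …, p - 1`: the coefficient of `X ^ (p - 1)` in `q` is linear in `y`.
  refine ⟨fun i ↦ (2 * p * ∏ j ∈ (Finset.range p).erase i, ((i : F) - j))⁻¹, fun y ↦ ?_⟩
  set q : Polynomial F := (.X + .C y) ^ p - (.X - .C y) ^ p with hq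
  have degree_q : q.degree < (Finset.range p).card := by
    have degree_pow : ((.X + .C y : Polynomial F) ^ p).degree = p := by simp
    rw [Finset.card_range, ← degree_pow]
    refine Polynomial.degree_sub_lt_left (by simp) (pow_ne_zero _ (Polynomial.X_add_C_ne_zero y)) ?_
    rw [((Polynomial.monic_X_add_C y).pow p).leadingCoeff,
      ((Polynomial.monic_X_sub_C y).pow p).leadingCoeff]
  have coeff_q : q.coeff (p - 1) = 2 * p * y := by
    obtain ⟨k, rfl⟩ := Nat.exists_eq_succ_of_ne_zero hp0
    rw [hq, sub_eq_add_neg Polynomial.X, ← Polynomial.C_neg, Polynomial.coeff_sub,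
      Polynomial.coeff_X_add_C_pow, Polynomial.coeff_X_add_C_pow]
    simp
    ring
  have interpolation := Lagrange.coeff_eq_sum Nat.cast_injective.injOn degree_q
  rw [Finset.card_range, coeff_q] at interpolation
  have hp' : (2 * p : F) ≠ 0 := by simp [hp0]
  rw [← mul_right_inj' hp', interpolation, Finset.mul_sum]
  refine Finset.sum_congr rfl fun i _ ↦ ?_
  simp only [hq, Polynomial.eval_sub, Polynomial.eval_pow, Polynomial.eval_add, Polynomial.eval_X,
    Polynomial.eval_C]
  field_simp

variable {p : ℕ} {μ : Measure ℝ}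

lemma sub_pow_le_add_pow_of_even {R : Type*} [CommRing R] [LinearOrder R] [IsStrictOrderedRing R]
    (hp : Even p) {x y : R} (hx : 0 ≤ x) (hy : 0 ≤ y) : (x - y) ^ p ≤ (x + y) ^ p := by
  rw [← hp.pow_abs]
  exact pow_le_pow_left₀ (abs_nonneg _) (abs_le.mpr ⟨by linarith, by linarith⟩) p

lemma exists_max_zero_eq_sum (hp : Even p) (hp0 : p ≠ 0) :
    ∃ w : ℕ → ℝ, ∀ y : ℝ, max y 0 =
      ∑ i ∈ Finset.range p, w i * ((y + i) ^ p - min ((y + i) ^ p) ((y - i) ^ p)) := by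
  obtain ⟨w, hw⟩ := exists_sum_mul_add_pow_sub_sub_pow (F := ℝ) hp0
  refine ⟨w, fun y ↦ ?_⟩
  rcases le_total 0 y with hy | hy
  · have min_eq (i : ℕ) : min ((y + i) ^ p) ((y - i) ^ p) = (i - y) ^ p := by
      rw [min_eq_right (sub_pow_le_add_pow_of_even hp hy i.cast_nonneg), ← hp.neg_pow,
        neg_sub]
    simp_rw [max_eq_left hy, min_eq, add_comm y, hw]
  · have min_eq (i : ℕ) : min ((y + i) ^ p) ((y - i) ^ p) = (y + i) ^ p := by
      have h := sub_pow_le_add_pow_of_even hp (neg_nonneg.mpr hy) (i.cast_nonneg (α := ℝ))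
      rw [← hp.neg_pow (-y - i), ← hp.neg_pow (-y + i)] at h
      exact min_eq_left (by convert h using 2 <;> ring)
    simp [max_eq_right hy, min_eq]

/-- The `p`-th power of the quantization error of a two-point codebook `{a, b}` on the line
(the distortion). Absolute values are omitted, so this is meant for even `p`. -/
noncomputable def distortion (p : ℕ) (μ : Measure ℝ) (a b : ℝ) : ℝ :=
  ∫ ξ, min ((ξ - a) ^ p) ((ξ - b) ^ p) ∂μ

/-- The stop-loss transform `c ↦ 𝔼[(ξ - c)⁺]`; its slopes encode the distribution function. -/
noncomputable def stopLoss (μ : Measure ℝ) (c : ℝ) : ℝ :=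
  ∫ ξ, max (ξ - c) 0 ∂μ

lemma quantErr_two_pow (hp : Even p) (hp0 : p ≠ 0) (x : Fin 2 → ℝ) :
    quantErr p 2 μ x ^ p = distortion p μ (x 0) (x 1) := by
  have iInf_eq_min (f : Fin 2 → ℝ≥0∞) : ⨅ i, f i = min (f 0) (f 1) :=
    eq_of_forall_le_iff fun a ↦ by simp [Fin.forall_fin_two]
  have rpow_eq (y : ℝ) : (‖y‖₊ : ℝ≥0∞) ^ (p : ℝ) = ENNReal.ofReal (y ^ p) := by
    rw [ENNReal.rpow_natCast, ← enorm_eq_nnnorm, ← enorm_pow,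
      Real.enorm_of_nonneg (hp.pow_nonneg y)]
  rw [quantErr, one_div, Real.rpow_inv_natCast_pow ENNReal.toReal_nonneg hp0, distortion,
    integral_eq_lintegral_of_nonneg_ae
      (.of_forall fun ξ ↦ le_min (hp.pow_nonneg _) (hp.pow_nonneg _)) (by fun_prop)]
  simp [iInf_eq_min, rpow_eq, ENNReal.ofReal_mono.map_min]

variable [IsFiniteMeasure μ]

lemma integrable_sub_pow (hμ : MemLp id p μ) (a : ℝ) : Integrable (fun ξ ↦ (ξ - a) ^ p) μ := by
  rcases eq_or_ne p 0 with rfl | hp0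
  · simp
  refine ((hμ.sub (memLp_const a)).integrable_norm_pow hp0).mono' (by fun_prop) ?_
  simp

lemma integrable_max_sub_zero (hμ : Integrable id μ) (c : ℝ) :
    Integrable (fun ξ ↦ max (ξ - c) 0) μ :=
  (hμ.sub (integrable_const c)).pos_part

lemma exists_stopLoss_eq_sum_distortion (hp : Even p) (hp0 : p ≠ 0) :
    ∃ w : ℕ → ℝ, ∀ (μ : Measure ℝ) [IsFiniteMeasure μ], MemLp id p μ → ∀ c, stopLoss μ c =
      ∑ i ∈ Finset.range p,
        w i * (distortion p μ (c - i) (c - i) - distortion p μ (c - i) (c + i)) := by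
  obtain ⟨w, hw⟩ := exists_max_zero_eq_sum hp hp0
  refine ⟨w, fun μ _ hμ c ↦ ?_⟩
  let D (a b ξ : ℝ) : ℝ := min ((ξ - a) ^ p) ((ξ - b) ^ p)
  have hD (a b : ℝ) : Integrable (D a b) μ :=
    (integrable_sub_pow hμ a).inf (integrable_sub_pow hμ b)
  calc stopLoss μ c
      = ∫ ξ, ∑ i ∈ Finset.range p, w i * (D (c - i) (c - i) ξ - D (c - i) (c + i) ξ) ∂μ := by
        simp only [stopLoss, hw, D, min_self, ← sub_add, ← sub_sub]
    _ = ∑ i ∈ Finset.range p, ∫ ξ, w i * (D (c - i) (c - i) ξ - D (c - i) (c + i) ξ) ∂μ :=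
        integral_finsetSum _ fun i _ ↦ ((hD _ _).sub (hD _ _)).const_mul _
    _ = _ := by
        simp_rw [integral_const_mul, integral_sub (hD _ _) (hD _ _)]
        rfl

lemma mul_measureReal_Ioi_le_stopLoss_sub (hμ : Integrable id μ) {x y : ℝ} (hxy : x ≤ y) :
    (y - x) * μ.real (Set.Ioi y) ≤ stopLoss μ x - stopLoss μ y := by
  have hint := integrable_max_sub_zero hμ
  rw [← integral_indicator_one measurableSet_Ioi, ← integral_const_mul, stopLoss, stopLoss,
    ← integral_sub (hint x) (hint y)]
  refine integral_mono (((integrable_const 1).indicator measurableSet_Ioi).const_mul _)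
    ((hint x).sub (hint y)) fun ξ ↦ ?_
  rcases le_or_gt ξ y with h | h
  · simp [h.not_gt, h]
  · simp [h, h.le, (hxy.trans_lt h).le]

lemma stopLoss_sub_le_mul_measureReal_Ioi (hμ : Integrable id μ) {x y : ℝ} (hxy : x ≤ y) :
    stopLoss μ x - stopLoss μ y ≤ (y - x) * μ.real (Set.Ioi x) := by
  have hint := integrable_max_sub_zero hμ
  rw [← integral_indicator_one measurableSet_Ioi, ← integral_const_mul, stopLoss, stopLoss,
    ← integral_sub (hint x) (hint y)]
  refine integral_mono ((hint x).sub (hint y))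
    (((integrable_const 1).indicator measurableSet_Ioi).const_mul _) fun ξ ↦ ?_
  rcases le_or_gt ξ x with h | h
  · simp [h.not_gt, h, h.trans hxy]
  · have := le_max_left (ξ - y) 0
    simp only [h.le, sub_nonneg, sup_of_le_left, Set.mem_Ioi, h, Set.indicator_of_mem,
      Pi.one_apply, mul_one]
    linarith

end StopLoss

section Cdf

open ProbabilityTheory

lemma one_sub_cdf (μ : Measure ℝ) [IsProbabilityMeasure μ] (x : ℝ) :
    1 - cdf μ x = μ.real (Set.Ioi x) := by
  rw [cdf_eq_real, ← probReal_compl_eq_one_sub measurableSet_Iic, Set.compl_Iic]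

section Convergence

variable {ι : Type*} {l : Filter ι} {μ : ι → Measure ℝ} {ν : Measure ℝ}
  [∀ i, IsProbabilityMeasure (μ i)] [IsProbabilityMeasure ν] {u x y : ℝ}

lemma eventually_cdf_lt_of_tendsto_stopLoss (hμ : ∀ i, Integrable id (μ i))
    (hν : Integrable id ν) (hlim : ∀ c, Tendsto (fun i ↦ stopLoss (μ i) c) l (𝓝 (stopLoss ν c)))
    (hxy : x < y) (h : cdf ν y < u) : ∀ᶠ i in l, cdf (μ i) x < u := by
  have hdiff : (y - x) * (1 - u) < stopLoss ν x - stopLoss ν y := by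
    refine lt_of_lt_of_le ?_ (mul_measureReal_Ioi_le_stopLoss_sub hν hxy.le)
    rw [← one_sub_cdf]
    have := sub_pos.mpr hxy
    gcongr
  filter_upwards [((hlim x).sub (hlim y)).eventually_const_lt hdiff] with i hi
  have := hi.trans_le (stopLoss_sub_le_mul_measureReal_Ioi (hμ i) hxy.le)
  rwa [← one_sub_cdf, mul_lt_mul_iff_right₀ (sub_pos.mpr hxy), sub_lt_sub_iff_left] at this

lemma eventually_lt_cdf_of_tendsto_stopLoss (hμ : ∀ i, Integrable id (μ i))
    (hν : Integrable id ν) (hlim : ∀ c, Tendsto (fun i ↦ stopLoss (μ i) c) l (𝓝 (stopLoss ν c)))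
    (hxy : x < y) (h : u < cdf ν x) : ∀ᶠ i in l, u < cdf (μ i) y := by
  have hdiff : stopLoss ν x - stopLoss ν y < (y - x) * (1 - u) := by
    refine (stopLoss_sub_le_mul_measureReal_Ioi hν hxy.le).trans_lt ?_
    rw [← one_sub_cdf]
    have := sub_pos.mpr hxy
    gcongr
  filter_upwards [((hlim x).sub (hlim y)).eventually_lt_const hdiff] with i hi
  have := (mul_measureReal_Ioi_le_stopLoss_sub (hμ i) hxy.le).trans_lt hi
  rwa [← one_sub_cdf, mul_lt_mul_iff_right₀ (sub_pos.mpr hxy), sub_lt_sub_iff_left] at this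

end Convergence

lemma cdf_le_cdf_of_stopLoss_eq {μ ν : Measure ℝ} [IsProbabilityMeasure μ]
    [IsProbabilityMeasure ν] (hμ : Integrable id μ) (hν : Integrable id ν)
    (h : ∀ c, stopLoss μ c = stopLoss ν c) (x : ℝ) : cdf μ x ≤ cdf ν x := by
  have right_limit : Tendsto (cdf ν) (𝓝[>] x) (𝓝 (cdf ν x)) :=
    ((cdf ν).right_continuous x).mono Set.Ioi_subset_Ici_self
  refine ge_of_tendsto right_limit ?_
  filter_upwards [self_mem_nhdsWithin] with y hxy
  have hxy : x < y := hxy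
  have := mul_measureReal_Ioi_le_stopLoss_sub hν hxy.le
  rw [← h, ← h] at this
  have := this.trans (stopLoss_sub_le_mul_measureReal_Ioi hμ hxy.le)
  rwa [← one_sub_cdf, ← one_sub_cdf, mul_le_mul_iff_right₀ (sub_pos.mpr hxy),
    sub_le_sub_iff_left] at this

lemma eq_of_stopLoss_eq {μ ν : Measure ℝ} [IsProbabilityMeasure μ] [IsProbabilityMeasure ν]
    (hμ : Integrable id μ) (hν : Integrable id ν) (h : ∀ c, stopLoss μ c = stopLoss ν c) :
    μ = ν := by
  refine Measure.eq_of_cdf μ ν (StieltjesFunction.ext fun x ↦ ?_)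
  exact le_antisymm (cdf_le_cdf_of_stopLoss_eq hμ hν h x)
    (cdf_le_cdf_of_stopLoss_eq hν hμ (fun c ↦ (h c).symm) x)

end Cdf

section Quantile

open ProbabilityTheory

/-- The quantile function (left-continuous generalized inverse of the distribution function),
meaningful for `u ∈ (0, 1)`: elsewhere the set may be empty or unbounded below and `sInf` is `0`. -/
noncomputable def quantile (μ : Measure ℝ) (u : ℝ) : ℝ :=
  sInf {x | u ≤ cdf μ x}

variable {u : ℝ}

lemma quantile_le_iff {μ : Measure ℝ} (hu : u ∈ Set.Ioo 0 1) (x : ℝ) :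
    quantile μ u ≤ x ↔ u ≤ cdf μ x := by
  have nonempty : {x | u ≤ cdf μ x}.Nonempty :=
    (((tendsto_cdf_atTop μ).eventually_const_lt hu.2).mono fun _ ↦ le_of_lt).exists
  have bddBelow : BddBelow {x | u ≤ cdf μ x} := by
    obtain ⟨x, hx⟩ := ((tendsto_cdf_atBot μ).eventually_lt_const hu.1).exists
    exact ⟨x, fun y hy ↦ ((monotone_cdf μ).reflect_lt (hx.trans_le hy)).le⟩
  refine ⟨fun h ↦ le_trans ?_ (monotone_cdf μ h), fun h ↦ csInf_le bddBelow h⟩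
  have right_limit : Tendsto (cdf μ) (𝓝[>] (quantile μ u)) (𝓝 (cdf μ (quantile μ u))) :=
    ((cdf μ).right_continuous _).mono Set.Ioi_subset_Ici_self
  refine ge_of_tendsto right_limit ?_
  filter_upwards [self_mem_nhdsWithin] with y hy
  obtain ⟨s, hs, hsy⟩ := exists_lt_of_csInf_lt nonempty hy
  exact hs.trans (monotone_cdf μ hsy.le)

lemma lt_quantile_iff {μ : Measure ℝ} (hu : u ∈ Set.Ioo 0 1) (x : ℝ) :
    x < quantile μ u ↔ cdf μ x < u := by
  simpa only [not_le] using (quantile_le_iff hu x).not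

lemma monotoneOn_quantile (μ : Measure ℝ) : MonotoneOn (quantile μ) (Set.Ioo 0 1) :=
  fun _ hu _ hv huv ↦ (quantile_le_iff hu _).mpr (huv.trans ((quantile_le_iff hv _).mp le_rfl))

lemma aemeasurable_quantile (μ : Measure ℝ) :
    AEMeasurable (quantile μ) (volume.restrict (Set.Ioo 0 1)) :=
  aemeasurable_restrict_of_monotoneOn measurableSet_Ioo (monotoneOn_quantile μ)

lemma map_quantile (μ : Measure ℝ) [IsProbabilityMeasure μ] :
    (volume.restrict (Set.Ioo 0 1)).map (quantile μ) = μ := by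
  refine Measure.ext_of_Iic _ _ fun x ↦ ?_
  have preimage_Iic : quantile μ ⁻¹' Set.Iic x ∩ Set.Ioo 0 1 = Set.Iic (cdf μ x) ∩ Set.Ioo 0 1 := by
    ext u
    exact and_congr_left fun hu ↦ quantile_le_iff hu x
  rw [Measure.map_apply_of_aemeasurable (aemeasurable_quantile μ) measurableSet_Iic,
    Measure.restrict_apply' measurableSet_Ioo, preimage_Iic, ← ofReal_cdf,
    ← Measure.restrict_apply measurableSet_Iic, restrict_Ioo_eq_restrict_Ioc,
    Measure.restrict_apply measurableSet_Iic, Set.inter_comm, Set.Ioc_inter_Iic, Real.volume_Ioc,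
    min_eq_right (cdf_le_one μ x), sub_zero]

variable {ι : Type*} {l : Filter ι} {μ : ι → Measure ℝ} {ν : Measure ℝ}
  [∀ i, IsProbabilityMeasure (μ i)] [IsProbabilityMeasure ν]

lemma tendsto_quantile_of_continuousAt (hμ : ∀ i, Integrable id (μ i)) (hν : Integrable id ν)
    (hlim : ∀ c, Tendsto (fun i ↦ stopLoss (μ i) c) l (𝓝 (stopLoss ν c)))
    (hu : u ∈ Set.Ioo 0 1) (hcont : ContinuousAt (quantile ν) u) :
    Tendsto (fun i ↦ quantile (μ i) u) l (𝓝 (quantile ν u)) := by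
  refine tendsto_order.mpr ⟨fun x hx ↦ ?_, fun y hy ↦ ?_⟩
  · obtain ⟨x', hxx', hx'⟩ := exists_between hx
    filter_upwards [eventually_cdf_lt_of_tendsto_stopLoss hμ hν hlim hxx'
      ((lt_quantile_iff hu x').mp hx')] with i hi
    exact (lt_quantile_iff hu x).mpr hi
  · obtain ⟨y', hy', hyy'⟩ := exists_between hy
    obtain ⟨y'', hy'', hyy''⟩ := exists_between hyy'
    have near : ∀ᶠ v in 𝓝[>] u, quantile ν v < y' ∧ v ∈ Set.Ioo 0 1 ∧ u < v :=
      .and (nhdsWithin_le_nhds (hcont.eventually_lt_const hy'))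
        (.and (nhdsWithin_le_nhds (Ioo_mem_nhds hu.1 hu.2)) self_mem_nhdsWithin)
    obtain ⟨v, hvy', hv, huv⟩ := near.exists
    have hcdf : u < cdf ν y' := huv.trans_le ((quantile_le_iff hv y').mp hvy'.le)
    filter_upwards [eventually_lt_cdf_of_tendsto_stopLoss hμ hν hlim hy'' hcdf] with i hi
    exact ((quantile_le_iff hu y'').mpr hi.le).trans_lt hyy''

lemma ae_tendsto_quantile (hμ : ∀ i, Integrable id (μ i)) (hν : Integrable id ν)
    (hlim : ∀ c, Tendsto (fun i ↦ stopLoss (μ i) c) l (𝓝 (stopLoss ν c))) :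
    ∀ᵐ u ∂volume.restrict (Set.Ioo 0 1),
      Tendsto (fun i ↦ quantile (μ i) u) l (𝓝 (quantile ν u)) := by
  have ae_continuous := (monotoneOn_quantile ν).countable_not_continuousWithinAt.ae_notMem
    (volume.restrict (Set.Ioo 0 1))
  filter_upwards [ae_continuous, ae_restrict_mem measurableSet_Ioo] with u hcont hu
  have hcont : ContinuousWithinAt (quantile ν) (Set.Ioo 0 1) u := by
    by_contra h
    exact hcont ⟨hu, h⟩
  exact tendsto_quantile_of_continuousAt hμ hν hlim hu
    (hcont.continuousAt (Ioo_mem_nhds hu.1 hu.2))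

end Quantile

section Determination

variable {p : ℕ}

lemma HasFiniteMoment.integrable {μ : Measure ℝ} [IsFiniteMeasure μ] (hp0 : p ≠ 0)
    (h : HasFiniteMoment p μ) : Integrable id μ :=
  (h.memLp hp0).integrable (by exact_mod_cast Nat.one_le_iff_ne_zero.mpr hp0)

section Uniqueness

variable {μ ν : Measure ℝ}

lemma differentiable_integral_one_sub_mul_pow [IsFiniteMeasure μ] (hμ : MemLp id p μ) :
    Differentiable ℝ fun t : ℝ ↦ ∫ ξ, (1 - t * ξ) ^ p ∂μ := by
  have integrable_pow {k : ℕ} (hk : k ∈ Finset.range (p + 1)) : Integrable (fun ξ ↦ ξ ^ k) μ := by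
    have hkp : k ≤ p := Finset.mem_range_succ_iff.mp hk
    simpa using integrable_sub_pow (hμ.mono_exponent (by exact_mod_cast hkp)) 0
  have expansion (t : ℝ) : ∫ ξ, (1 - t * ξ) ^ p ∂μ =
      ∑ k ∈ Finset.range (p + 1), (-t) ^ k * p.choose k * ∫ ξ, ξ ^ k ∂μ := by
    have binomial (ξ : ℝ) :
        (1 - t * ξ) ^ p = ∑ k ∈ Finset.range (p + 1), (-t) ^ k * p.choose k * ξ ^ k := by
      rw [sub_eq_neg_add, ← neg_mul, add_pow]
      simp only [mul_pow, one_pow, mul_one, mul_right_comm]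
    simp_rw [binomial]
    rw [integral_finsetSum _ fun k hk ↦ (integrable_pow hk).const_mul _]
    simp_rw [integral_const_mul]
  simp only [expansion]
  fun_prop

lemma abs_mul_quantErr_inv (hp : Even p) (hp0 : p ≠ 0) {t : ℝ} (ht : t ≠ 0) :
    |t| * quantErr p 2 μ ![t⁻¹, t⁻¹] = (∫ ξ, (1 - t * ξ) ^ p ∂μ) ^ (1 / p : ℝ) := by
  have quantErr_nonneg : 0 ≤ quantErr p 2 μ ![t⁻¹, t⁻¹] := by
    rw [quantErr]
    positivity
  have pow_eq : (|t| * quantErr p 2 μ ![t⁻¹, t⁻¹]) ^ p = ∫ ξ, (1 - t * ξ) ^ p ∂μ := by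
    rw [mul_pow, quantErr_two_pow hp hp0, hp.pow_abs, distortion, ← integral_const_mul]
    refine integral_congr_ae (.of_forall fun ξ ↦ ?_)
    simp only [Matrix.cons_val_zero, Matrix.cons_val_one, min_self]
    rw [← mul_pow, ← hp.neg_pow]
    congr 1
    field_simp
    ring
  rw [← pow_eq, one_div, Real.pow_rpow_inv_natCast (by positivity) hp0]

lemma eq_zero_of_quantErr_eq_add_const [IsProbabilityMeasure μ] [IsProbabilityMeasure ν]
    (hp : Even p) (hp0 : p ≠ 0) (hμ : MemLp id p μ) (hν : MemLp id p ν) {C : ℝ}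
    (h : ∀ a, quantErr p 2 μ ![a, a] = quantErr p 2 ν ![a, a] + C) : C = 0 := by
  let F (μ : Measure ℝ) (t : ℝ) : ℝ := (∫ ξ, (1 - t * ξ) ^ p ∂μ) ^ (1 / p : ℝ)
  have differentiableAt_F (μ : Measure ℝ) [IsProbabilityMeasure μ] (hμ : MemLp id p μ) :
      DifferentiableAt ℝ (F μ) 0 :=
    (differentiable_integral_one_sub_mul_pow hμ 0).rpow_const (by simp)
  have F_sub (t : ℝ) : F μ t - F ν t = C * |t| := by
    rcases eq_or_ne t 0 with rfl | ht
    · simp [F]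
    · simp only [F, ← abs_mul_quantErr_inv hp hp0 ht, h]
      ring
  by_contra hC
  refine not_differentiableAt_abs_zero ?_
  have abs_eq : (abs : ℝ → ℝ) = fun t ↦ C⁻¹ * (F μ t - F ν t) := by
    ext t
    rw [F_sub, inv_mul_cancel_left₀ hC]
  rw [abs_eq]
  exact ((differentiableAt_F μ hμ).sub (differentiableAt_F ν hν)).const_mul _

lemma eq_of_quantErr_eq [IsProbabilityMeasure μ] [IsProbabilityMeasure ν] (hp : Even p)
    (hp0 : p ≠ 0) (hμ : HasFiniteMoment p μ) (hν : HasFiniteMoment p ν)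
    (h : ∀ a b, quantErr p 2 μ ![a, b] = quantErr p 2 ν ![a, b]) : μ = ν := by
  obtain ⟨w, hw⟩ := exists_stopLoss_eq_sum_distortion hp hp0
  have distortion_eq (a b : ℝ) : distortion p μ a b = distortion p ν a b := by
    simpa [quantErr_two_pow hp hp0] using congrArg (· ^ p) (h a b)
  refine eq_of_stopLoss_eq (hμ.integrable hp0) (hν.integrable hp0) fun c ↦ ?_
  simp only [hw _ (hμ.memLp hp0), hw _ (hν.memLp hp0), distortion_eq]

end Uniqueness

variable {ι : Type*} {l : Filter ι} {μ : ι → Measure ℝ} {ν : Measure ℝ}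
  [∀ i, IsProbabilityMeasure (μ i)] [IsProbabilityMeasure ν]

lemma tendsto_stopLoss_of_tendsto_quantErr (hp : Even p) (hp0 : p ≠ 0)
    (hμ : ∀ i, HasFiniteMoment p (μ i)) (hν : HasFiniteMoment p ν)
    (h : ∀ x, Tendsto (fun i ↦ quantErr p 2 (μ i) x) l (𝓝 (quantErr p 2 ν x))) (c : ℝ) :
    Tendsto (fun i ↦ stopLoss (μ i) c) l (𝓝 (stopLoss ν c)) := by
  obtain ⟨w, hw⟩ := exists_stopLoss_eq_sum_distortion hp hp0
  have distortion_lim (a b : ℝ) :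
      Tendsto (fun i ↦ distortion p (μ i) a b) l (𝓝 (distortion p ν a b)) := by
    simpa [quantErr_two_pow hp hp0] using (h ![a, b]).pow p
  simp only [hw _ ((hμ _).memLp hp0), hw _ (hν.memLp hp0)]
  exact tendsto_finsetSum _ fun i _ ↦
    ((distortion_lim _ _).sub (distortion_lim _ _)).const_mul _

lemma tendsto_wassersteinDist_of_tendsto_quantErr [l.NeBot] [l.IsCountablyGenerated] (hp : Even p)
    (hp0 : p ≠ 0) (hμ : ∀ i, HasFiniteMoment p (μ i)) (hν : HasFiniteMoment p ν)
    (h : ∀ x, Tendsto (fun i ↦ quantErr p 2 (μ i) x) l (𝓝 (quantErr p 2 ν x))) :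
    Tendsto (fun i ↦ wassersteinDist p (μ i) ν) l (𝓝 0) := by
  have hp_pos : 0 < (p : ℝ) := by positivity
  have norm_ne_top {μ : Measure ℝ} (hμ : HasFiniteMoment p μ) := hμ.eLpNorm'_ne_top hp_pos.le
  have quantile_lim := ae_tendsto_quantile (fun i ↦ (hμ i).integrable hp0) (hν.integrable hp0)
    (tendsto_stopLoss_of_tendsto_quantErr hp hp0 hμ hν h)
  have norm_lim : Tendsto (fun i ↦ eLpNorm' id p (μ i)) l (𝓝 (eLpNorm' id p ν)) := by
    rw [← ENNReal.tendsto_toReal_iff (fun i ↦ norm_ne_top (hμ i)) (norm_ne_top hν)]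
    simpa only [← equantErr_zero (N := 2), toReal_equantErr] using h 0
  have ewassersteinDist_lim : Tendsto (fun i ↦ ewassersteinDist p (μ i) ν) l (𝓝 0) := by
    simpa only [map_quantile] using tendsto_ewassersteinDist_map hp_pos
      (fun i ↦ aemeasurable_quantile (μ i)) (aemeasurable_quantile ν)
      (by simpa only [map_quantile] using norm_ne_top hν) quantile_lim
      (by simpa only [map_quantile] using norm_lim)
  simpa only [Function.comp_def, toReal_ewassersteinDist hp_pos, ENNReal.toReal_zero] using
    (ENNReal.tendsto_toReal ENNReal.zero_ne_top).comp ewassersteinDist_lim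

end Determination

/-- dimension one, even integer order `p`, `N = 2`: (a) if
`e_{2,p}(μ, ·) = e_{2,p}(ν, ·) + C` on `ℝ²`, then `μ = ν`; (b) `W_p(μ_n, μ_∞) → 0` iff
`e_{2,p}(μ_n, ·) → e_{2,p}(μ_∞, ·)` uniformly on `ℝ²` iff pointwise on `ℝ²`. -/
theorem stmt17 (p : ℕ) (hp : 2 ≤ p) (hpeven : Even p) :
    (∀ (μ ν : Measure ℝ) (_ : IsProbabilityMeasure μ) (_ : IsProbabilityMeasure ν)
      (_ : HasFiniteMoment (p : ℝ) μ) (_ : HasFiniteMoment (p : ℝ) ν) (C : ℝ),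
      (∀ a b : ℝ, quantErr (p : ℝ) 2 μ ![a, b] = quantErr (p : ℝ) 2 ν ![a, b] + C) →
      μ = ν) ∧
    (∀ (μ : ℕ → Measure ℝ) (μ' : Measure ℝ)
      (_ : ∀ n, IsProbabilityMeasure (μ n)) (_ : IsProbabilityMeasure μ')
      (_ : ∀ n, HasFiniteMoment (p : ℝ) (μ n)) (_ : HasFiniteMoment (p : ℝ) μ'),
      (Tendsto (fun n => wassersteinDist (p : ℝ) (μ n) μ') atTop (𝓝 0) ↔
        TendstoUniformly (fun n (x : Fin 2 → ℝ) => quantErr (p : ℝ) 2 (μ n) x)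
          (quantErr (p : ℝ) 2 μ') atTop) ∧
      (Tendsto (fun n => wassersteinDist (p : ℝ) (μ n) μ') atTop (𝓝 0) ↔
        ∀ x : Fin 2 → ℝ,
          Tendsto (fun n => quantErr (p : ℝ) 2 (μ n) x) atTop
            (𝓝 (quantErr (p : ℝ) 2 μ' x)))) := by
  have hp0 : p ≠ 0 := by positivity
  have hp1 : 1 ≤ (p : ℝ) := by exact_mod_cast one_le_two.trans hp
  refine ⟨fun μ ν _ _ hμ hν C h ↦ ?_, fun μ ν _ _ hμ hν ↦ ?_⟩
  · have hC : C = 0 := eq_zero_of_quantErr_eq_add_const hpeven hp0 (hμ.memLp hp0) (hν.memLp hp0)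
      fun a ↦ h a a
    exact eq_of_quantErr_eq hpeven hp0 hμ hν fun a b ↦ by rw [h, hC, add_zero]
  · have uniform : Tendsto (fun n ↦ wassersteinDist p (μ n) ν) atTop (𝓝 0) →
        TendstoUniformly (fun n (x : Fin 2 → ℝ) ↦ quantErr p 2 (μ n) x) (quantErr p 2 ν) atTop :=
      tendstoUniformly_quantErr_of_tendsto_wassersteinDist hp1 hμ hν
    have wasserstein := tendsto_wassersteinDist_of_tendsto_quantErr (l := atTop) hpeven hp0 hμ hν
    exact ⟨⟨uniform, fun h ↦ wasserstein h.tendsto_at⟩,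
      ⟨fun h ↦ (uniform h).tendsto_at, wasserstein⟩⟩
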